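/- Let a > 0, b > 0, p ∈ (0,1), and q > 1, and let T := 1/(a(1−p)) + 1/(b(q−1)). Let V : ℝ → ℝ be a differentiable function with V(t) ≥ 0 for all t ≥ 0, and suppose that for every t ≥ 0 with V(t) > 0 one has V′(t) ≤ −a·V(t)^p − b·V(t)^q, and that V′(t) ≤ 0 whenever V(t) = 0. Then V(t) = 0 for all t ≥ T. -/

import Mathlib

/-!
For `r ≠ 1`, the inequality `V' ≤ -c V ^ r` says that `V ^ (1 - r) / (1 - r)` decreases at rate at
least `c`. For `r = q > 1` this quantity is negative, so while `V` stays positive its size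
`V ^ (1 - q) / (q - 1)` grows at rate at least `b` from a positive start, whatever `V 0` is: by time
`1 / (b (q - 1))` it exceeds `1 / (q - 1)`, that is, `V < 1`. For `r = p < 1` the quantity is
positive and at most `1 / (1 - p)` once `V ≤ 1`, so `V` reaches zero within a further time
`1 / (a (1 - p))`.
-/

open Set

section DecayInequality

variable {V V' : ℝ → ℝ} {x y c r m : ℝ}

theorem image_le_max_of_deriv_right_neg (hxy : x ≤ y) (hV : ContinuousOn V (Icc x y))
    (hV' : ∀ s ∈ Ico x y, HasDerivWithinAt V (V' s) (Ici s) s)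
    (hneg : ∀ s ∈ Ico x y, m < V s → V' s < 0) : V y ≤ max (V x) m := by
  refine le_of_forall_gt_imp_ge_of_dense fun d hd => ?_
  obtain ⟨hxd, hmd⟩ := max_lt_iff.mp hd
  exact image_le_of_deriv_right_lt_deriv_boundary' hV hV' hxd.le continuousOn_const
    (fun s _ => hasDerivWithinAt_const s _ d) (fun s hs hsd => hneg s hs (hsd ▸ hmd))
    (right_mem_Icc.mpr hxy)

theorem pos_of_deriv_right_le_neg_mul_rpow_of_pos_right (hc : 0 < c) (hV : ContinuousOn V (Icc x y))
    (hV' : ∀ s ∈ Ico x y, HasDerivWithinAt V (V' s) (Ici s) s)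
    (hdecay : ∀ s ∈ Ico x y, 0 < V s → V' s ≤ -c * V s ^ r) (hy : 0 < V y) :
    ∀ s ∈ Icc x y, 0 < V s := fun s hs => by
  have hneg : ∀ u ∈ Ico x y, 0 < V u → V' u < 0 := fun u hu hVu =>
    (hdecay u hu hVu).trans_lt
      (mul_neg_of_neg_of_pos (neg_lt_zero.mpr hc) (Real.rpow_pos_of_pos hVu r))
  have hmax : V y ≤ max (V s) 0 :=
    image_le_max_of_deriv_right_neg hs.2 (hV.mono (Icc_subset_Icc_left hs.1))
      (fun u hu => hV' u (Ico_subset_Ico_left hs.1 hu))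
      fun u hu => hneg u (Ico_subset_Ico_left hs.1 hu)
  exact (lt_max_iff.mp (hy.trans_le hmax)).resolve_right (lt_irrefl 0)

theorem hasDerivWithinAt_rpow_one_sub_div {f : ℝ → ℝ} {f' : ℝ} {s : Set ℝ} (hr : r ≠ 1)
    (hf : HasDerivWithinAt f f' s x) (hx : f x ≠ 0) :
    HasDerivWithinAt (fun t => f t ^ (1 - r) / (1 - r)) (f' * f x ^ (-r)) s x := by
  have hr' : 1 - r ≠ 0 := sub_ne_zero.mpr hr.symm
  refine ((hf.rpow_const (p := 1 - r) (Or.inl hx)).div_const (1 - r)).congr_deriv ?_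
  rw [sub_sub_cancel_left]
  field_simp

theorem rpow_one_sub_div_le_of_deriv_right_le_neg_mul_rpow (hr : r ≠ 1) (hxy : x ≤ y)
    (hV : ContinuousOn V (Icc x y)) (hV' : ∀ s ∈ Ico x y, HasDerivWithinAt V (V' s) (Ici s) s)
    (hpos : ∀ s ∈ Icc x y, 0 < V s) (hdecay : ∀ s ∈ Ico x y, V' s ≤ -c * V s ^ r) :
    V y ^ (1 - r) / (1 - r) ≤ V x ^ (1 - r) / (1 - r) - c * (y - x) := by
  have hrate : ∀ s ∈ Ico x y, V' s * V s ^ (-r) ≤ -c := fun s hs => by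
    have hVs := hpos s (Ico_subset_Icc_self hs)
    rw [Real.rpow_neg hVs.le, ← div_eq_mul_inv, div_le_iff₀ (Real.rpow_pos_of_pos hVs r)]
    exact hdecay s hs
  have hcont : ContinuousOn (fun s => V s ^ (1 - r) / (1 - r)) (Icc x y) :=
    (hV.rpow_const fun s hs => Or.inl (hpos s hs).ne').div_const _
  have hline (s : ℝ) :
      HasDerivAt (fun s => V x ^ (1 - r) / (1 - r) - c * (s - x)) (-c) s := by
    simpa using (((hasDerivAt_id s).sub_const x).const_mul c).const_sub (V x ^ (1 - r) / (1 - r))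
  exact image_le_of_deriv_right_le_deriv_boundary hcont
    (fun s hs => hasDerivWithinAt_rpow_one_sub_div hr (hV' s hs)
      (hpos s (Ico_subset_Icc_self hs)).ne')
    (by simp) (fun s _ => (hline s).continuousAt.continuousWithinAt)
    (fun s _ => (hline s).hasDerivWithinAt) hrate (right_mem_Icc.mpr hxy)

theorem nonpos_of_deriv_right_le_neg_mul_rpow_of_lt_one (hc : 0 < c) (hr : r < 1)
    (hV : ContinuousOn V (Icc x y)) (hV' : ∀ s ∈ Ico x y, HasDerivWithinAt V (V' s) (Ici s) s)
    (hdecay : ∀ s ∈ Ico x y, 0 < V s → V' s ≤ -c * V s ^ r)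
    (hm : 0 ≤ m) (hx : V x ≤ m) (htime : m ^ (1 - r) / (c * (1 - r)) ≤ y - x) : V y ≤ 0 := by
  by_contra! hy
  have hr' : 0 < 1 - r := sub_pos.mpr hr
  have hxy : x ≤ y := sub_nonneg.mp (htime.trans' (by positivity))
  have hpos := pos_of_deriv_right_le_neg_mul_rpow_of_pos_right hc hV hV' hdecay hy
  have hdrop := rpow_one_sub_div_le_of_deriv_right_le_neg_mul_rpow hr.ne hxy hV hV' hpos
    fun s hs => hdecay s hs (hpos s (Ico_subset_Icc_self hs))
  have hfinal : 0 < V y ^ (1 - r) / (1 - r) := by positivity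
  have hinitial : V x ^ (1 - r) / (1 - r) ≤ m ^ (1 - r) / (1 - r) := by
    have := (hpos x (left_mem_Icc.mpr hxy)).le
    gcongr
  rw [mul_comm c, ← div_div, div_le_iff₀' hc] at htime
  linarith

theorem lt_of_deriv_right_le_neg_mul_rpow_of_one_lt (hc : 0 < c) (hr : 1 < r)
    (hV : ContinuousOn V (Icc x y)) (hV' : ∀ s ∈ Ico x y, HasDerivWithinAt V (V' s) (Ici s) s)
    (hdecay : ∀ s ∈ Ico x y, 0 < V s → V' s ≤ -c * V s ^ r)
    (hm : 0 < m) (htime : m ^ (1 - r) / (c * (r - 1)) ≤ y - x) : V y < m := by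
  by_contra! hy
  have hr' : 0 < r - 1 := sub_pos.mpr hr
  have hxy : x ≤ y := sub_nonneg.mp (htime.trans' (by positivity))
  have hpos := pos_of_deriv_right_le_neg_mul_rpow_of_pos_right hc hV hV' hdecay (hm.trans_le hy)
  have hdrop := rpow_one_sub_div_le_of_deriv_right_le_neg_mul_rpow hr.ne' hxy hV hV' hpos
    fun s hs => hdecay s hs (hpos s (Ico_subset_Icc_self hs))
  have hinitial : 0 < V x ^ (1 - r) / (r - 1) :=
    div_pos (Real.rpow_pos_of_pos (hpos x (left_mem_Icc.mpr hxy)) _) hr'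
  have hfinal : V y ^ (1 - r) / (r - 1) ≤ m ^ (1 - r) / (r - 1) := by
    gcongr ?_ / _
    exact Real.rpow_le_rpow_of_nonpos hm hy (sub_nonpos.mpr hr.le)
  have hsign (u : ℝ) : u / (1 - r) = -(u / (r - 1)) := by rw [← div_neg, neg_sub]
  rw [mul_comm c, ← div_div, div_le_iff₀' hc] at htime
  rw [hsign, hsign] at hdrop
  linarith

end DecayInequality

theorem stmt_14_general {a b p q : ℝ} (ha : 0 < a) (hb : 0 < b) (hp : p < 1) (hq : 1 < q)
    {V V' : ℝ → ℝ} (hV : ContinuousOn V (Ici 0))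
    (hV' : ∀ t, 0 ≤ t → HasDerivWithinAt V (V' t) (Ici t) t)
    (hdecay : ∀ t, 0 ≤ t → 0 < V t → V' t ≤ -a * V t ^ p - b * V t ^ q)
    {t : ℝ} (ht : 1 / (a * (1 - p)) + 1 / (b * (q - 1)) ≤ t) : V t ≤ 0 := by
  set τ := 1 / (b * (q - 1))
  have hτ_nonneg : 0 ≤ τ := (one_div_pos.mpr (mul_pos hb (sub_pos.mpr hq))).le
  have hdecay_p (s : ℝ) (hs : 0 ≤ s) (hVs : 0 < V s) : V' s ≤ -a * V s ^ p := by
    linarith [hdecay s hs hVs, mul_pos hb (Real.rpow_pos_of_pos hVs q)]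
  have hdecay_q (s : ℝ) (hs : 0 ≤ s) (hVs : 0 < V s) : V' s ≤ -b * V s ^ q := by
    linarith [hdecay s hs hVs, mul_pos ha (Real.rpow_pos_of_pos hVs p)]
  have hVτ : V τ < 1 :=
    lt_of_deriv_right_le_neg_mul_rpow_of_one_lt (x := 0) hb hq (hV.mono Icc_subset_Ici_self)
      (fun s hs => hV' s hs.1) (fun s hs => hdecay_q s hs.1) one_pos
      (by rw [Real.one_rpow, sub_zero])
  exact nonpos_of_deriv_right_le_neg_mul_rpow_of_lt_one ha hp
    (hV.mono fun s hs => hτ_nonneg.trans hs.1) (fun s hs => hV' s (hτ_nonneg.trans hs.1))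
    (fun s hs => hdecay_p s (hτ_nonneg.trans hs.1)) zero_le_one hVτ.le
    (by rw [Real.one_rpow]; exact le_sub_iff_add_le.mpr ht)

/-- Lyapunov characterization of fixed-time stability (Polyakov): a nonnegative
differentiable function satisfying `V' ≤ −aV^p − bV^q` (with `0 < p < 1 < q`)
whenever `V > 0`, and `V' ≤ 0` whenever `V = 0`, vanishes for all
`t ≥ T = 1/(a(1−p)) + 1/(b(q−1))`. -/
theorem stmt_14 (a b p q : ℝ) (ha : 0 < a) (hb : 0 < b)
    (hp : p ∈ Set.Ioo (0 : ℝ) 1) (hq : 1 < q)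
    (T : ℝ) (hT : T = 1 / (a * (1 - p)) + 1 / (b * (q - 1)))
    (V : ℝ → ℝ) (hV : Differentiable ℝ V)
    (hVnonneg : ∀ t, 0 ≤ t → 0 ≤ V t)
    (hVdecay : ∀ t, 0 ≤ t → 0 < V t → deriv V t ≤ -a * V t ^ p - b * V t ^ q)
    (hVzero : ∀ t, 0 ≤ t → V t = 0 → deriv V t ≤ 0) :
    ∀ t, T ≤ t → V t = 0 := fun t ht => by
  have hT_pos : 0 < T := hT ▸ add_pos (one_div_pos.mpr (mul_pos ha (sub_pos.mpr hp.2)))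
    (one_div_pos.mpr (mul_pos hb (sub_pos.mpr hq)))
  exact le_antisymm (stmt_14_general ha hb hp.2 hq hV.continuous.continuousOn
    (fun s _ => (hV s).hasDerivAt.hasDerivWithinAt) hVdecay (hT ▸ ht))
    (hVnonneg t (hT_pos.le.trans ht))
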